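/- arXiv:1111.2777 — 2 statements merged into one kernel-verified Lean document; each statement's English description precedes it below -/
import Mathlib

section
/- For a commutative Noetherian ring R, the global dimension of R equals the supremum over all maximal ideals m of the global dimensions of the localizations R_m, and for each maximal ideal m, gd(R_m) = pd_R(R/m). -/
/-!
STATEMENT 7: for a commutative Noetherian ring `R`, the global dimension of `R` is the
supremum over all maximal ideals `m` of the global dimensions of the localizations `R_m`
(expressed by: `gd(R) ≤ n ↔ ∀ m, gd(R_m) ≤ n`), and for each maximal ideal `m`,
`gd(R_m) = pd_R(R/m)` (expressed by: `gd(R_m) ≤ n ↔ pd_R(R/m) ≤ n`, for all `n`).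
-/

open CategoryTheory

/-- `M` has projective dimension `≤ n`. -/
def ProjDimLE (R : Type) [Ring R] (M : ModuleCat.{0} R) (n : ℕ) : Prop :=
  ∃ P : ProjectiveResolution M, ∀ i : ℕ, n < i → Limits.IsZero (P.complex.X i)

/-- `R` has global dimension `≤ n`: every `R`-module has projective dimension `≤ n`. -/
def GlobalDimLE (R : Type) [Ring R] (n : ℕ) : Prop :=
  ∀ M : ModuleCat.{0} R, ProjDimLE R M n

/-!
By Baer's criterion and dimension shifting, `id N ≤ n` as soon as `Extⁿ⁺¹(R/I, N) = 0` for every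
ideal `I`. Uniform bounds on projective and on injective dimensions are equivalent, so `gd R ≤ n`
can be tested on the cyclic modules `R/I`; and since injective dimension over a Noetherian ring is
detected at the maximal ideals, `gd R` is determined by the `gd R_m`.

Over a Noetherian local ring, prime filtrations reduce the test to the modules `R/p` with `p` prime.
If `p ≠ m`, any `x ∈ m \ p` is regular on `R/p`, so `pd (R/p) + 1 = pd ((R/p)/x(R/p))`, and the
latter module has a filtration with factors `R/q` for primes `q > p`. Noetherian induction leaves
only the residue field. Finally `pd_R (R/m)` is computed locally, where `R/m` becomes the residue
field at `m` and zero at every other maximal ideal.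
-/

open Abelian Limits

universe v u

section Abelian

variable {C : Type u} [Category.{v} C] [Abelian C]

theorem exact_epi_comp {S : ShortComplex C} (hS : S.Exact) {W : C} (p : W ⟶ S.X₁) [Epi p] :
    (ShortComplex.mk (p ≫ S.f) S.g (by simp)).Exact := by
  let φ : ShortComplex.mk (p ≫ S.f) S.g (by simp) ⟶ S :=
    { τ₁ := p
      τ₂ := 𝟙 _
      τ₃ := 𝟙 _ }
  have : Epi φ.τ₁ := ‹Epi p›
  exact (ShortComplex.exact_iff_of_epi_of_isIso_of_mono φ).2 hS

theorem exact_comp_mono {S : ShortComplex C} (hS : S.Exact) {W : C} (i : S.X₃ ⟶ W) [Mono i] :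
    (ShortComplex.mk S.f (S.g ≫ i) (by simp)).Exact := by
  let φ : S ⟶ ShortComplex.mk S.f (S.g ≫ i) (by simp) :=
    { τ₁ := 𝟙 _
      τ₂ := 𝟙 _
      τ₃ := i }
  have : Mono φ.τ₃ := ‹Mono i›
  exact (ShortComplex.exact_iff_of_epi_of_isIso_of_mono φ).1 hS

theorem quasiIso_toSingle₀Equiv_symm {K : ChainComplex C ℕ} {X : C} {ε : K.X 0 ⟶ X} (hε : Epi ε)
    (w : K.d 1 0 ≫ ε = 0) (h₀ : (ShortComplex.mk _ _ w).Exact)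
    (h : ∀ n, K.ExactAt (n + 1)) :
    QuasiIso ((ChainComplex.toSingle₀Equiv K X).symm ⟨ε, w⟩) := by
  generalize hπ : (ChainComplex.toSingle₀Equiv K X).symm ⟨ε, w⟩ = π
  obtain rfl : π.f 0 = ε := hπ ▸ ChainComplex.toSingle₀Equiv_symm_apply_f_zero ε w
  refine ⟨fun n => ?_⟩
  cases n with
  | zero =>
    rw [ChainComplex.quasiIsoAt₀_iff,
      ShortComplex.quasiIso_iff_of_zeros' _ (K.shape _ _ (by simp)) rfl rfl]
    exact ⟨h₀, hε⟩
  | succ n =>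
    rw [quasiIsoAt_iff_exactAt' _ _ (ChainComplex.exactAt_succ_single_obj _ _)]
    exact h n

/-- The projective resolution `⋯ ⟶ Q₁ ⟶ Q₀ ⟶ X₂` of `X₃` obtained by splicing a projective
resolution `Q` of `X₁` with a short exact sequence `0 ⟶ X₁ ⟶ X₂ ⟶ X₃ ⟶ 0` whose middle term is
projective. The differential `Q₀ ⟶ X₂` carries no sign. -/
noncomputable def spliceResolution {S : ShortComplex C} (hS : S.ShortExact) [Projective S.X₂]
    (Q : ProjectiveResolution S.X₁) : ProjectiveResolution S.X₃ :=
  let p : Q.complex.X 0 ⟶ S.X₁ := Q.π.f 0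
  have : Epi p := inferInstanceAs (Epi (Q.π.f 0))
  have := hS.mono_f
  have hexact : (ShortComplex.mk (Q.complex.d 1 0) p Q.complex_d_comp_π_f_zero).Exact :=
    Q.exact₀
  have hp : Q.complex.d 1 0 ≫ p ≫ S.f = 0 :=
    (Q.complex_d_comp_π_f_zero_assoc S.f).trans zero_comp
  have hg : (p ≫ S.f) ≫ S.g = 0 := by simp
  { complex := Q.complex.augment (p ≫ S.f) hp
    projective := by
      rintro (_ | n)
      exacts [‹Projective S.X₂›, Q.projective n]
    π := (ChainComplex.toSingle₀Equiv _ _).symm ⟨S.g, hg⟩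
    quasiIso := by
      refine quasiIso_toSingle₀Equiv_symm (K := Q.complex.augment (p ≫ S.f) hp) hS.epi_g hg
        (exact_epi_comp hS.exact p) fun n => ?_
      rw [HomologicalComplex.exactAt_iff' _ (n + 2) (n + 1) n (by simp) (by simp)]
      cases n with
      | zero => exact exact_comp_mono hexact S.f
      | succ n => exact Q.exact_succ n }

theorem hasProjectiveDimensionLE_iff_exists_projectiveResolution [EnoughProjectives C]
    (X : C) (n : ℕ) :
    HasProjectiveDimensionLE X n ↔
      ∃ P : ProjectiveResolution X, ∀ i, n < i → IsZero (P.complex.X i) := by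
  let := HasExt.standard C
  constructor
  · intro h
    induction n generalizing X with
    | zero =>
      have := (projective_iff_hasProjectiveDimensionLE_zero X).2 h
      exact ⟨.self X, fun i hi => HomologicalComplex.isZero_single_obj_X _ _ _ _ hi.ne'⟩
    | succ n ih =>
      have hS : (ShortComplex.mk _ _ (kernel.condition (Projective.π X))).ShortExact :=
        { exact := ShortComplex.exact_kernel _ }
      obtain ⟨Q, hQ⟩ := ih _ ((hS.hasProjectiveDimensionLT_X₃_iff n inferInstance).1 h)
      refine ⟨spliceResolution hS Q, fun i hi => ?_⟩
      obtain _ | i := i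
      exacts [absurd hi (by lia), hQ i (by lia)]
  · rintro ⟨P, hP⟩
    refine .mk fun i hi Y e => ?_
    obtain ⟨f, hf, rfl⟩ := P.extMk_surjective e (i + 1) rfl
    obtain rfl : f = 0 := (hP i (by lia)).eq_of_src f 0
    simp

theorem forall_hasProjectiveDimensionLE_iff_forall_hasInjectiveDimensionLE (n : ℕ) :
    (∀ X : C, HasProjectiveDimensionLE X n) ↔ ∀ X : C, HasInjectiveDimensionLE X n := by
  let := HasExt.standard C
  constructor <;> intro h X
  · refine .mk fun i hi Y e => ?_
    have := h Y
    exact e.eq_zero_of_hasProjectiveDimensionLT (n + 1) hi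
  · refine .mk fun i hi Y e => ?_
    have := h Y
    exact e.eq_zero_of_hasInjectiveDimensionLT (n + 1) hi

end Abelian

section Auslander

variable {R : Type u} [Ring R]

theorem injective_of_forall_subsingleton_ext_one (N : ModuleCat.{u} R)
    (h : ∀ I : Ideal R, Subsingleton (Ext (ModuleCat.of R (R ⧸ I)) N 1)) :
    Injective N := by
  rw [← Module.injective_iff_injective_object, ← Module.Baer.iff_injective]
  intro I g
  let S : ShortComplex (ModuleCat.{u} R) :=
    ModuleCat.shortComplexOfCompEqZero I.subtype I.mkQ
      (LinearMap.exact_subtype_mkQ I).linearMap_comp_eq_zero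
  have hS : S.ShortExact := ModuleCat.shortComplex_shortExact S
    (LinearMap.exact_subtype_mkQ I) I.injective_subtype I.mkQ_surjective
  have : Subsingleton (Ext S.X₃ N 1) := h I
  obtain ⟨e, he⟩ := Ext.contravariant_sequence_exact₁ hS N
    (Ext.mk₀ (ModuleCat.ofHom g : S.X₁ ⟶ N)) (add_zero 1) (Subsingleton.elim _ _)
  obtain ⟨g', rfl⟩ := (Ext.mk₀_bijective _ _).2 e
  rw [Ext.mk₀_comp_mk₀, (Ext.mk₀_bijective _ _).1.eq_iff] at he
  exact ⟨g'.hom, fun x hx => congrArg (fun k => k.hom ⟨x, hx⟩) he⟩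

theorem hasInjectiveDimensionLE_of_forall_subsingleton_ext {n : ℕ} (N : ModuleCat.{u} R)
    (h : ∀ I : Ideal R, Subsingleton (Ext (ModuleCat.of R (R ⧸ I)) N (n + 1))) :
    HasInjectiveDimensionLE N n := by
  induction n generalizing N with
  | zero =>
    rw [HasInjectiveDimensionLE, zero_add, ← injective_iff_hasInjectiveDimensionLT_one]
    exact injective_of_forall_subsingleton_ext_one N h
  | succ n ih =>
    have hS : (ShortComplex.mk _ _ (cokernel.condition (Injective.ι N))).ShortExact :=
      { exact := ShortComplex.exact_cokernel _ }
    refine (hS.hasInjectiveDimensionLT_X₃_iff n inferInstance).1 (ih _ fun I => ?_)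
    refine subsingleton_of_forall_eq 0 fun e => ?_
    have := h I
    obtain ⟨e', rfl⟩ := Ext.covariant_sequence_exact₃ _ hS e rfl (Subsingleton.elim _ _)
    rw [Ext.eq_zero_of_injective e', Ext.zero_comp]

theorem forall_hasProjectiveDimensionLE_of_forall_quotient_ideal {n : ℕ}
    (h : ∀ I : Ideal R, HasProjectiveDimensionLE (ModuleCat.of R (R ⧸ I)) n)
    (M : ModuleCat.{u} R) : HasProjectiveDimensionLE M n := by
  revert M
  rw [forall_hasProjectiveDimensionLE_iff_forall_hasInjectiveDimensionLE]
  refine fun N => hasInjectiveDimensionLE_of_forall_subsingleton_ext N fun I => ?_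
  have := h I
  exact HasProjectiveDimensionLT.subsingleton _ (n + 1) _ le_rfl N

end Auslander

theorem hasProjectiveDimensionLE_of_subsingleton {R : Type u} [Ring R] {n : ℕ} (M : ModuleCat.{u} R)
    [Subsingleton M] : HasProjectiveDimensionLE M n :=
  have := (ModuleCat.isZero_of_subsingleton M).hasProjectiveDimensionLT_zero
  hasProjectiveDimensionLT_of_ge M 0 (n + 1) n.succ.zero_le

section Noetherian

variable {R : Type u} [CommRing R] [IsNoetherianRing R] {n : ℕ}

theorem hasProjectiveDimensionLE_of_forall_quotient_prime (M : Type u) [AddCommGroup M]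
    [Module R M] [Module.Finite R M]
    (h : ∀ p : Ideal R, p.IsPrime → Module.annihilator R M ≤ p →
      HasProjectiveDimensionLE (ModuleCat.of R (R ⧸ p)) n) :
    HasProjectiveDimensionLE (ModuleCat.of R M) n := by
  induction ‹Module.Finite R M› using
    IsNoetherianRing.induction_on_isQuotientEquivQuotientPrime R with
  | subsingleton N =>
    exact hasProjectiveDimensionLE_of_subsingleton _
  | quotient N p e =>
    have := h p.asIdeal p.isPrime (by rw [e.annihilator_eq, Ideal.annihilator_quotient])
    exact hasProjectiveDimensionLT_of_iso e.symm.toModuleIso (n + 1)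
  | exact N₁ N₂ N₃ f g hf hg hfg h₁ h₃ =>
    have hS := ModuleCat.shortComplex_shortExact
      (ModuleCat.shortComplexOfCompEqZero f g hfg.linearMap_comp_eq_zero) hfg hf hg
    exact hS.hasProjectiveDimensionLT_X₂ (n + 1)
      (h₁ fun p hp hle => h p hp ((f.annihilator_le_of_injective hf).trans hle))
      (h₃ fun p hp hle => h p hp ((g.annihilator_le_of_surjective hg).trans hle))

variable [IsLocalRing R]

open IsLocalRing

theorem hasProjectiveDimensionLE_quotient_of_residueField
    (h : HasProjectiveDimensionLE (ModuleCat.of R (ResidueField R)) n)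
    (p : Ideal R) (hp : p.IsPrime) :
    HasProjectiveDimensionLE (ModuleCat.of R (R ⧸ p)) n := by
  induction p using IsNoetherian.induction with | hgt p ih => ?_
  obtain rfl | hne := eq_or_ne p (maximalIdeal R)
  · exact h
  obtain ⟨x, hxm, hxp⟩ := SetLike.exists_of_lt ((le_maximalIdeal hp.ne_top).lt_of_ne hne)
  have hreg : IsSMulRegular (R ⧸ p) x :=
    (isSMulRegular_quotient_iff_mem_of_smul_mem _ _).2 fun _ hy =>
      (hp.mem_or_mem hy).resolve_left hxp
  have hquot : HasProjectiveDimensionLE (ModuleCat.of R (QuotSMulTop x (R ⧸ p))) n := by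
    refine hasProjectiveDimensionLE_of_forall_quotient_prime _ fun q hq hle =>
      ih q (SetLike.lt_iff_le_and_exists.2 ⟨?_, x, ?_, hxp⟩) hq
    · calc p = Module.annihilator R (R ⧸ p) := Ideal.annihilator_quotient.symm
        _ ≤ Module.annihilator R (QuotSMulTop x (R ⧸ p)) :=
          LinearMap.annihilator_le_of_surjective _ (Submodule.mkQ_surjective _)
        _ ≤ q := hle
    · exact hle (QuotSMulTop.mem_annihilator _ x)
  have hsucc := ModuleCat.projectiveDimension_quotSMulTop_eq_succ_of_isSMulRegular
    (ModuleCat.of R (R ⧸ p)) x hreg hxm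
  rw [← projectiveDimension_le_iff] at hquot ⊢
  calc projectiveDimension (ModuleCat.of R (R ⧸ p))
      ≤ projectiveDimension (ModuleCat.of R (R ⧸ p)) + 1 := le_add_of_nonneg_right (by simp)
    _ = projectiveDimension (ModuleCat.of R (QuotSMulTop x (R ⧸ p))) := hsucc.symm
    _ ≤ n := hquot

theorem forall_hasProjectiveDimensionLE_iff_residueField :
    (∀ M : ModuleCat.{u} R, HasProjectiveDimensionLE M n) ↔
      HasProjectiveDimensionLE (ModuleCat.of R (ResidueField R)) n :=
  ⟨fun h => h _, fun h => forall_hasProjectiveDimensionLE_of_forall_quotient_ideal fun _ =>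
    hasProjectiveDimensionLE_of_forall_quotient_prime _ fun p hp _ =>
      hasProjectiveDimensionLE_quotient_of_residueField h p hp⟩

end Noetherian

section Localization

variable {R : Type u} [CommRing R] {n : ℕ}

/-- The identification of the chosen localization `M.localizedModule S` in `ModuleCat` with any
other localization `N` of `M` at `S`, as modules over `Localization S`. -/
noncomputable def localizedModuleIso (S : Submonoid R) (M : ModuleCat.{u} R) {N : Type u}
    [AddCommGroup N] [Module R N] [Module (Localization S) N]
    [IsScalarTower R (Localization S) N] (f : M →ₗ[R] N) [IsLocalizedModule S f] :
    M.localizedModule S ≅ ModuleCat.of (Localization S) N :=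
  let e : M.localizedModule S ≃ₗ[R] N :=
    IsLocalizedModule.linearEquiv S (M.localizedModuleMkLinearMap S) f
  (e.extendScalarsOfIsLocalization S (Localization S)).toModuleIso

theorem forall_hasProjectiveDimensionLE_localization (S : Submonoid R)
    (h : ∀ M : ModuleCat.{u} R, HasProjectiveDimensionLE M n)
    (N : ModuleCat.{u} (Localization S)) : HasProjectiveDimensionLE N n := by
  let := Module.compHom N (algebraMap R (Localization S))
  have : IsScalarTower R (Localization S) N := .of_algebraMap_smul fun _ _ => rfl
  have : IsLocalizedModule S (LinearMap.id : N →ₗ[R] N) :=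
    isLocalizedModule_id S N (Localization S)
  have := h (ModuleCat.of R N)
  have := ModuleCat.localizedModule_hasProjectiveDimensionLE n S (ModuleCat.of R N)
  exact hasProjectiveDimensionLT_of_iso
    (localizedModuleIso S (ModuleCat.of R N) (LinearMap.id : N →ₗ[R] N)) (n + 1)

theorem forall_hasProjectiveDimensionLE_iff_forall_maximalSpectrum [IsNoetherianRing R] :
    (∀ M : ModuleCat.{u} R, HasProjectiveDimensionLE M n) ↔
      ∀ (m : MaximalSpectrum R) (M : ModuleCat.{u} (Localization.AtPrime m.asIdeal)),
        HasProjectiveDimensionLE M n := by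
  refine ⟨fun h m => forall_hasProjectiveDimensionLE_localization _ h, fun h => ?_⟩
  rw [forall_hasProjectiveDimensionLE_iff_forall_hasInjectiveDimensionLE]
  intro N
  rw [ModuleCat.hasInjectiveDimensionLE_iff_forall_maximalSpectrum]
  exact fun m =>
    (forall_hasProjectiveDimensionLE_iff_forall_hasInjectiveDimensionLE n).1 (h m) _

/-- The localization of `R ⧸ p` at a prime ideal `p` is the residue field of `p`, realized as the
residue field of the local ring `Localization.AtPrime p`. -/
noncomputable def localizedModuleQuotientIsoResidueField (p : Ideal R) [p.IsPrime] :
    (ModuleCat.of R (R ⧸ p)).localizedModule p.primeCompl ≅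
      ModuleCat.of (Localization.AtPrime p)
        (IsLocalRing.ResidueField (Localization.AtPrime p)) :=
  let A := Localization.AtPrime p
  have hp : Submodule.localized' A p.primeCompl (Algebra.linearMap R A) p =
      IsLocalRing.maximalIdeal A :=
    (Ideal.localized'_eq_map A p.primeCompl p).trans Localization.AtPrime.map_eq_maximalIdeal
  localizedModuleIso p.primeCompl (ModuleCat.of R (R ⧸ p))
      (Submodule.toLocalizedQuotient' A p.primeCompl (Algebra.linearMap R A) p) ≪≫
    (Submodule.quotEquivOfEq _ _ hp).toModuleIso

theorem subsingleton_localizedModule_of_not_annihilator_le {M : ModuleCat.{u} R} {p : Ideal R}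
    [p.IsPrime] (h : ¬ Module.annihilator R M ≤ p) :
    Subsingleton (M.localizedModule p.primeCompl) := by
  obtain ⟨r, hrM, hrp⟩ := SetLike.not_le_iff_exists.1 h
  rw [IsLocalizedModule.subsingleton_iff p.primeCompl (M.localizedModuleMkLinearMap p.primeCompl)]
  exact fun x => ⟨r, hrp, Module.mem_annihilator.1 hrM x⟩

theorem hasProjectiveDimensionLE_quotient_iff_residueField [IsNoetherianRing R]
    (m : MaximalSpectrum R) :
    HasProjectiveDimensionLE (ModuleCat.of R (R ⧸ m.asIdeal)) n ↔
      HasProjectiveDimensionLE (ModuleCat.of (Localization.AtPrime m.asIdeal)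
        (IsLocalRing.ResidueField (Localization.AtPrime m.asIdeal))) n := by
  let e := localizedModuleQuotientIsoResidueField m.asIdeal
  let K := ModuleCat.of R (R ⧸ m.asIdeal)
  have : Module.Finite R K := inferInstanceAs (Module.Finite R (R ⧸ m.asIdeal))
  rw [K.hasProjectiveDimensionLE_iff_forall_maximalSpectrum]
  refine ⟨fun h => ?_, fun h m' => ?_⟩
  · have := h m
    exact hasProjectiveDimensionLT_of_iso e (n + 1)
  obtain rfl | hne := eq_or_ne m m'
  · exact hasProjectiveDimensionLT_of_iso e.symm (n + 1)
  · have hle : ¬ Module.annihilator R (R ⧸ m.asIdeal) ≤ m'.asIdeal := fun hle =>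
      hne (MaximalSpectrum.ext (m.isMaximal.eq_of_le m'.isMaximal.ne_top
        (Ideal.annihilator_quotient.ge.trans hle)))
    have := subsingleton_localizedModule_of_not_annihilator_le (M := K) hle
    exact hasProjectiveDimensionLE_of_subsingleton _

end Localization

theorem projDimLE_iff {R : Type} [Ring R] (M : ModuleCat.{0} R) (n : ℕ) :
    ProjDimLE R M n ↔ HasProjectiveDimensionLE M n :=
  (hasProjectiveDimensionLE_iff_exists_projectiveResolution M n).symm

theorem globalDimLE_iff {R : Type} [Ring R] {n : ℕ} :
    GlobalDimLE R n ↔ ∀ M : ModuleCat.{0} R, HasProjectiveDimensionLE M n :=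
  forall_congr' fun M => projDimLE_iff M n

theorem globalDim_eq_sup_localizations
    (R : Type) [CommRing R] [IsNoetherianRing R] :
    (∀ n : ℕ, GlobalDimLE R n ↔
      ∀ m : MaximalSpectrum R, GlobalDimLE (Localization.AtPrime m.asIdeal) n) ∧
    (∀ (m : MaximalSpectrum R) (n : ℕ),
      GlobalDimLE (Localization.AtPrime m.asIdeal) n ↔
        ProjDimLE R (ModuleCat.of R (R ⧸ m.asIdeal)) n) := by
  refine ⟨fun n => ?_, fun m n => ?_⟩
  · simp only [globalDimLE_iff]
    exact forall_hasProjectiveDimensionLE_iff_forall_maximalSpectrum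
  · have : IsNoetherianRing (Localization.AtPrime m.asIdeal) :=
      IsLocalization.isNoetherianRing m.asIdeal.primeCompl _ inferInstance
    rw [globalDimLE_iff, projDimLE_iff]
    exact forall_hasProjectiveDimensionLE_iff_residueField.trans
      (hasProjectiveDimensionLE_quotient_iff_residueField m).symm
end

section
/- If R is a commutative Noetherian ring of finite global dimension, then R is regular, i.e., every localization of R at a prime ideal is a regular local ring. -/
/-!
STATEMENT 8: if `R` is a commutative Noetherian ring of finite global dimension, then `R`
is regular: every localization of `R` at a prime ideal is a regular local ring.
-/

open CategoryTheory

/-- A commutative Noetherian local ring is regular if the embedding dimension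
`dim_{R/m} (m/m²)` equals the Krull dimension of `R`. -/
def IsRegularLocal (R : Type) [CommRing R] [IsLocalRing R] : Prop :=
  (Module.finrank (IsLocalRing.ResidueField R) (IsLocalRing.CotangentSpace R) :
    WithBot (WithTop ℕ)) = ringKrullDim R

/-!
Localizing a resolution of `R ⧸ p` bounds the projective dimension of the residue field `k` of the
local ring `A = R_p`, so it is enough to show that a Noetherian local ring `(A, 𝔪, k)` with
`pd k < ∞` is regular. If `𝔪` is an associated prime of `A`, then `k` embeds in `A`, and this forces
every finite module of finite projective dimension to be free; applied to `k` it gives `𝔪 = 0`.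
Otherwise, unless `𝔪 = 0`, prime avoidance yields a regular element `x ∈ 𝔪` outside `𝔪 ^ 2`. Its
class spans a direct summand of `𝔪 / x𝔪` isomorphic to `k`, and reduction modulo `x` does not
increase the projective dimension of `𝔪`, so `k` has finite projective dimension over `A / x`.
By induction on the dimension `A / x` is regular, and hence so is `A`.
-/

open IsLocalRing

universe u v

theorem hasProjectiveDimensionLE_of_projectiveResolution {C : Type u} [Category.{v} C]
    [Abelian C] {X : C} (P : ProjectiveResolution X) {n : ℕ}
    (hP : ∀ i, n < i → Limits.IsZero (P.complex.X i)) : HasProjectiveDimensionLE X n := by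
  have := HasExt.standard C
  refine HasProjectiveDimensionLT.mk fun i hi Y e ↦ ?_
  obtain ⟨f, _, rfl⟩ := P.extMk_surjective e (i + 1) rfl
  obtain rfl := (hP i hi).eq_of_src f 0
  exact P.extMk_zero _ _

section ProjectiveDimension

variable {R : Type u} [CommRing R] [Small.{v} R]

theorem module_projective_iff_hasProjectiveDimensionLE_zero {M : Type v}
    [AddCommGroup M] [Module R M] :
    Module.Projective R M ↔ HasProjectiveDimensionLE (ModuleCat.of R M) 0 :=
  (IsProjective.iff_projective M).trans (projective_iff_hasProjectiveDimensionLE_zero _)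

theorem hasProjectiveDimensionLE_succ_iff_of_exact {K P M : Type v} [AddCommGroup K]
    [Module R K] [AddCommGroup P] [Module R P] [AddCommGroup M] [Module R M]
    [Module.Projective R P] {i : K →ₗ[R] P} {f : P →ₗ[R] M} (hi : Function.Injective i)
    (hif : Function.Exact i f) (hf : Function.Surjective f) {n : ℕ} :
    HasProjectiveDimensionLE (ModuleCat.of R M) (n + 1) ↔
      HasProjectiveDimensionLE (ModuleCat.of R K) n :=
  (ModuleCat.shortComplex_shortExact
    (ModuleCat.shortComplexOfCompEqZero i f hif.linearMap_comp_eq_zero) hif hi hf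
    ).hasProjectiveDimensionLT_X₃_iff n ((IsProjective.iff_projective P).mp ‹_›)

theorem hasProjectiveDimensionLE_ker {P M : Type v} [AddCommGroup P] [Module R P]
    [AddCommGroup M] [Module R M] [Module.Projective R P] {f : P →ₗ[R] M}
    (hf : Function.Surjective f) {n : ℕ}
    (h : HasProjectiveDimensionLE (ModuleCat.of R M) (n + 1)) :
    HasProjectiveDimensionLE (ModuleCat.of R (LinearMap.ker f)) n :=
  (hasProjectiveDimensionLE_succ_iff_of_exact Subtype.val_injective
    (LinearMap.exact_subtype_ker_map f) hf).mp h

theorem hasProjectiveDimensionLE_of_isLocalizedModule (S : Submonoid R)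
    {M N : Type v} [AddCommGroup M] [Module R M] [AddCommGroup N] [Module R N]
    [Module (Localization S) N] [IsScalarTower R (Localization S) N] (f : M →ₗ[R] N)
    [IsLocalizedModule S f] {n : ℕ} (h : HasProjectiveDimensionLE (ModuleCat.of R M) n) :
    HasProjectiveDimensionLE (ModuleCat.of (Localization S) N) n := by
  have : Small.{v} (Localization S) := small_of_surjective Localization.mkHom_surjective
  have := ModuleCat.localizedModule_hasProjectiveDimensionLE n S (ModuleCat.of R M)
  have := ModuleCat.localizedModule_isLocalizedModule (ModuleCat.of R M) S
  let e : (ModuleCat.of R M).localizedModule S ≃ₗ[R] N := IsLocalizedModule.linearEquiv S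
    ((ModuleCat.of R M).localizedModuleMkLinearMap S) f
  exact ModuleCat.hasProjectiveDimensionLE_of_linearEquiv
    (N := ModuleCat.of (Localization S) N) (e.extendScalarsOfIsLocalization S (Localization S)) n

end ProjectiveDimension

theorem hasProjectiveDimensionLE_quotient_succ_iff {R : Type u} [CommRing R] {I : Ideal R}
    {n : ℕ} : HasProjectiveDimensionLE (ModuleCat.of R (R ⧸ I)) (n + 1) ↔
      HasProjectiveDimensionLE (ModuleCat.of R I) n :=
  hasProjectiveDimensionLE_succ_iff_of_exact I.injective_subtype (LinearMap.exact_subtype_mkQ I)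
    I.mkQ_surjective

theorem hasProjectiveDimensionLE_quotient_map {R : Type u} [CommRing R] (S : Submonoid R)
    (I : Ideal R) {n : ℕ} (h : HasProjectiveDimensionLE (ModuleCat.of R (R ⧸ I)) n) :
    HasProjectiveDimensionLE (ModuleCat.of (Localization S)
      (Localization S ⧸ I.map (algebraMap R (Localization S)))) n := by
  rw [← Ideal.localized'_eq_map (Localization S) S I]
  exact hasProjectiveDimensionLE_of_isLocalizedModule S (I.toLocalizedQuotient' (Localization S) S
    (Algebra.linearMap R (Localization S))) h

theorem hasProjectiveDimensionLE_residueField_of_quotient {R : Type u} [CommRing R] (p : Ideal R)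
    [p.IsPrime] {n : ℕ} (h : HasProjectiveDimensionLE (ModuleCat.of R (R ⧸ p)) n) :
    HasProjectiveDimensionLE (ModuleCat.of (Localization.AtPrime p)
      (ResidueField (Localization.AtPrime p))) n := by
  have := hasProjectiveDimensionLE_quotient_map p.primeCompl p h
  rwa [Localization.AtPrime.map_eq_maximalIdeal] at this

section QuotSMulTop

variable {A : Type u} [CommRing A]

theorem quotSMulTop_map_injective {x : A} {K M P : Type*} [AddCommGroup K] [Module A K]
    [AddCommGroup P] [Module A P] [AddCommGroup M] [Module A M] (hM : IsSMulRegular M x)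
    {i : K →ₗ[A] P} {f : P →ₗ[A] M} (hi : Function.Injective i) (hif : Function.Exact i f) :
    Function.Injective (QuotSMulTop.map x i) := by
  have h := QuotSMulTop.map_first_exact_on_four_term_exact_of_isSMulRegular_last
    (f₁ := (0 : PUnit →ₗ[A] K)) ((LinearMap.exact_zero_iff_injective _ _).mpr hi) hif hM
  rw [map_zero] at h
  exact (LinearMap.exact_zero_iff_injective _ _).mp h

theorem projective_quotSMulTop (x : A) (P : Type*) [AddCommGroup P] [Module A P]
    [Module.Projective A P] :
    Module.Projective (A ⧸ Ideal.span {x}) (QuotSMulTop x P) :=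
  .of_equiv ((QuotSMulTop.equivQuotTensor x P).extendScalarsOfSurjective
    Ideal.Quotient.mk_surjective).symm

theorem hasProjectiveDimensionLE_quotSMulTop {x : A} (hx : IsSMulRegular A x) {n : ℕ}
    {M : Type (max u v)} [AddCommGroup M] [Module A M] (hM : IsSMulRegular M x)
    (h : HasProjectiveDimensionLE (ModuleCat.of A M) n) :
    HasProjectiveDimensionLE (ModuleCat.of (A ⧸ Ideal.span {x}) (QuotSMulTop x M)) n := by
  induction n generalizing M with
  | zero =>
    rw [← module_projective_iff_hasProjectiveDimensionLE_zero] at h ⊢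
    exact projective_quotSMulTop x M
  | succ n ih =>
    let f : (M →₀ A) →ₗ[A] M := Finsupp.linearCombination A id
    have hf : Function.Surjective f := Finsupp.linearCombination_id_surjective A M
    have hK : IsSMulRegular (LinearMap.ker f) x := hx.finsupp.submodule _ _
    have hif := LinearMap.exact_subtype_ker_map f
    have hsurj : Function.Surjective (algebraMap A (A ⧸ Ideal.span {x})) :=
      Ideal.Quotient.mk_surjective
    exact (hasProjectiveDimensionLE_succ_iff_of_exact
      (i := (QuotSMulTop.map x (LinearMap.ker f).subtype).extendScalarsOfSurjective hsurj)
      (f := (QuotSMulTop.map x f).extendScalarsOfSurjective hsurj)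
      (quotSMulTop_map_injective hM Subtype.val_injective hif) (QuotSMulTop.map_exact x hif hf)
      (QuotSMulTop.map_surjective x hf)).mpr (ih hK (hasProjectiveDimensionLE_ker hf h))

end QuotSMulTop

theorem lTensor_injective_of_injective_of_flat {R K F M N : Type*} [CommSemiring R]
    [AddCommMonoid K] [Module R K] [AddCommMonoid F] [Module R F] [Module.Flat R F]
    [AddCommMonoid M] [Module R M] [Module.Flat R M] [AddCommMonoid N] [Module R N]
    {ι : K →ₗ[R] F} (hι : Function.Injective ι) {i : M →ₗ[R] N} (hi : Function.Injective i) :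
    Function.Injective (i.lTensor K) := by
  have hcomp : Function.Injective (i.lTensor F ∘ₗ ι.rTensor M) :=
    (Module.Flat.lTensor_preserves_injective_linearMap i hi).comp
      (Module.Flat.rTensor_preserves_injective_linearMap ι hι)
  rw [LinearMap.lTensor_comp_rTensor, ← LinearMap.rTensor_comp_lTensor] at hcomp
  exact .of_comp hcomp

section LocalRing

variable {A : Type u} [CommRing A] [IsLocalRing A]

theorem free_of_hasProjectiveDimensionLE_of_residueField_injective
    [IsNoetherianRing A] {ι : ResidueField A →ₗ[A] A} (hι : Function.Injective ι)
    {M : Type u} [AddCommGroup M] [Module A M] [Module.Finite A M] {n : ℕ}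
    (h : HasProjectiveDimensionLE (ModuleCat.of A M) n) : Module.Free A M := by
  induction n generalizing M with
  | zero =>
    rw [← module_projective_iff_hasProjectiveDimensionLE_zero] at h
    exact Module.free_of_flat_of_isLocalRing
  | succ n ih =>
    obtain ⟨m, f, hf⟩ := Module.Finite.exists_fin' A M
    have := ih (hasProjectiveDimensionLE_ker hf h)
    -- Freeness of `M` follows once `ker f → Aᵐ` stays injective modulo the maximal ideal.
    exact Module.free_of_lTensor_residueField_injective _ f hf (LinearMap.exact_subtype_ker_map f)
      (lTensor_injective_of_injective_of_flat hι Subtype.val_injective)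

theorem maximalIdeal_eq_bot_of_faithfulSMul_residueField [FaithfulSMul A (ResidueField A)] :
    maximalIdeal A = ⊥ := by
  rw [← ker_residue]
  exact (RingHom.injective_iff_ker_eq_bot _).mp (FaithfulSMul.algebraMap_injective A _)

theorem exists_isSMulRegular_mem_maximalIdeal_notMem_sq [IsNoetherianRing A]
    (hA : maximalIdeal A ∉ associatedPrimes A A) (hm : maximalIdeal A ≠ ⊥) :
    ∃ x ∈ maximalIdeal A, x ∉ maximalIdeal A ^ 2 ∧ IsSMulRegular A x := by
  by_contra! hcon
  have hsub : (maximalIdeal A : Set A) ⊆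
      ⋃ I ∈ insert (maximalIdeal A ^ 2) (associatedPrimes A A), (I : Set A) := by
    intro x hx
    rw [Set.biUnion_insert, biUnion_associatedPrimes_eq_compl_regular]
    exact or_iff_not_imp_left.mpr (hcon x hx)
  -- Prime avoidance tolerates the non-prime `𝔪 ^ 2` as one of the two exceptional ideals.
  obtain ⟨P, rfl | hP, hle⟩ := ((maximalIdeal A).subset_union_prime_finite
    ((associatedPrimes.finite A A).insert _) (f := id) (maximalIdeal A ^ 2) (maximalIdeal A ^ 2)
    fun I hI hne _ ↦ (hI.resolve_left hne).isPrime).mp hsub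
  · refine hm (Submodule.eq_bot_of_le_smul_of_le_jacobson_bot (maximalIdeal A) _
      (maximalIdeal A).fg_of_isNoetherianRing ?_ (maximalIdeal_le_jacobson _))
    rwa [smul_eq_mul, ← pow_two]
  · exact hA ((maximalIdeal.isMaximal A).eq_of_le hP.isPrime.ne_top hle ▸ hP)

theorem exists_retract_quotient_of_isMaximal {R N : Type*} [CommRing R] (I : Ideal R) [I.IsMaximal]
    [AddCommGroup N] [Module R N] {y : N} (hy : ∀ a ∈ I, a • y = 0)
    (hyI : y ∉ I • (⊤ : Submodule R N)) :
    ∃ (i : (R ⧸ I) →ₗ[R] N) (r : N →ₗ[R] R ⧸ I), r ∘ₗ i = LinearMap.id := by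
  let := Ideal.Quotient.field I
  obtain ⟨φ, hφ⟩ := Module.Projective.exists_dual_eq_one (R ⧸ I)
    ((Submodule.Quotient.mk_eq_zero (I • ⊤)).not.mpr hyI)
  refine ⟨I.liftQ (LinearMap.toSpanSingleton R N y) hy,
    φ.restrictScalars R ∘ₗ Submodule.mkQ (I • ⊤), ?_⟩
  refine Submodule.linearMap_qext _ (LinearMap.ext_ring ?_)
  change φ (Submodule.Quotient.mk ((1 : R) • y)) = 1
  rw [one_smul, hφ]

open Pointwise in
theorem quotSMulTop_mk_mem_map_smul_top_iff {R M : Type*} [CommRing R] [AddCommGroup M]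
    [Module R M] {I : Ideal R} {x : R} (hx : x ∈ I) {y : M} :
    (Submodule.Quotient.mk y : QuotSMulTop x M) ∈
      I.map (algebraMap R (R ⧸ Ideal.span {x})) • (⊤ : Submodule (R ⧸ Ideal.span {x}) _) ↔
    y ∈ I • (⊤ : Submodule R M) := by
  have hle : x • (⊤ : Submodule R M) ≤ I • ⊤ := by
    rw [← Submodule.ideal_span_singleton_smul]
    exact Submodule.smul_mono_left ((Ideal.span_singleton_le_iff_mem I).mpr hx)
  rw [← Submodule.restrictScalars_mem R, Ideal.smul_restrictScalars, Submodule.restrictScalars_top,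
    ← Submodule.range_mkQ, LinearMap.range_eq_map, ← Submodule.map_smul'', ← Submodule.mkQ_apply,
    ← Submodule.mem_comap, Submodule.comap_map_mkQ, sup_eq_right.mpr hle]

theorem hasProjectiveDimensionLE_residueField_quotient {x : A} (hxm : x ∈ maximalIdeal A)
    (hxm2 : x ∉ maximalIdeal A ^ 2) (hx : IsSMulRegular A x) [IsLocalRing (A ⧸ Ideal.span {x})]
    {n : ℕ} (h : HasProjectiveDimensionLE (ModuleCat.of A (maximalIdeal A)) n) :
    HasProjectiveDimensionLE (ModuleCat.of (A ⧸ Ideal.span {x})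
      (ResidueField (A ⧸ Ideal.span {x}))) n := by
  have hsurj : Function.Surjective (algebraMap A (A ⧸ Ideal.span {x})) :=
    Ideal.Quotient.mk_surjective
  -- The class of `x` in `𝔪 / x𝔪` is killed by `𝔪` and, as `x ∉ 𝔪 ^ 2`, lies outside `𝔪 (𝔪 / x𝔪)`.
  let y : QuotSMulTop x (maximalIdeal A) := Submodule.Quotient.mk ⟨x, hxm⟩
  have hy : ∀ b ∈ maximalIdeal (A ⧸ Ideal.span {x}), b • y = 0 := by
    rw [← map_maximalIdeal_of_surjective _ hsurj]
    intro b hb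
    obtain ⟨a, ha, rfl⟩ := (Ideal.mem_map_iff_of_surjective _ hsurj).mp hb
    rw [algebraMap_smul, ← Submodule.Quotient.mk_smul, Submodule.Quotient.mk_eq_zero]
    have hax : a • (⟨x, hxm⟩ : maximalIdeal A) = x • ⟨a, ha⟩ := Subtype.ext (mul_comm a x)
    exact hax ▸ Submodule.smul_mem_pointwise_smul _ _ _ Submodule.mem_top
  have hy' : y ∉ maximalIdeal (A ⧸ Ideal.span {x}) • (⊤ : Submodule (A ⧸ Ideal.span {x}) _) := by
    rwa [← map_maximalIdeal_of_surjective _ hsurj, quotSMulTop_mk_mem_map_smul_top_iff hxm,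
      Submodule.mem_smul_top_iff, smul_eq_mul, ← pow_two]
  obtain ⟨i, r, hri⟩ := exists_retract_quotient_of_isMaximal (maximalIdeal _) hy hy'
  let retract : Retract
      (ModuleCat.of (A ⧸ Ideal.span {x}) (ResidueField (A ⧸ Ideal.span {x})))
      (ModuleCat.of (A ⧸ Ideal.span {x}) (QuotSMulTop x (maximalIdeal A))) :=
    { i := ModuleCat.ofHom i
      r := ModuleCat.ofHom r
      retract := ModuleCat.hom_ext hri }
  have := hasProjectiveDimensionLE_quotSMulTop hx (hx.submodule _ _) h
  exact retract.hasProjectiveDimensionLT (n + 1)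

end LocalRing

theorem spanFinrank_le_spanFinrank_map_add_spanFinrank_ker {R S : Type*} [CommRing R]
    [CommRing S] {f : R →+* S} (hf : Function.Surjective f) {I : Ideal R}
    (hker : (RingHom.ker f).FG) (hle : RingHom.ker f ≤ I) (hI : (I.map f).FG) :
    I.spanFinrank ≤ (I.map f).spanFinrank + (RingHom.ker f).spanFinrank := by
  obtain ⟨t, htcard, ht⟩ := Submodule.FG.exists_span_set_encard_eq_spanFinrank hker
  obtain ⟨s', hscard, hs⟩ := Submodule.FG.exists_span_set_encard_eq_spanFinrank hI
  obtain ⟨s, rfl, hinj⟩ := Set.exists_image_eq_injOn_of_subset_range (f := f) (t := s')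
    (hf.range_eq ▸ s'.subset_univ)
  have hspan : Ideal.span (s ∪ t) = I := by
    have hcomap := congrArg (Ideal.comap f) ((Ideal.map_span f s).trans hs)
    rwa [Ideal.comap_map_of_surjective' _ hf, Ideal.comap_map_of_surjective' _ hf,
      sup_eq_left.mpr hle, ← ht, Ideal.submodule_span_eq, ← Ideal.span_union] at hcomap
  have hcard := (Submodule.spanFinrank_span_le_encard (R := R) (s ∪ t)).trans
    (Set.encard_union_le s t)
  rw [Ideal.submodule_span_eq, hspan, ← hinj.encard_image, hscard, htcard] at hcard
  exact_mod_cast hcard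

theorem isRegularLocalRing_of_quotient_span_singleton {A : Type*} [CommRing A] [IsLocalRing A]
    [IsNoetherianRing A] {x : A} (hxm : x ∈ maximalIdeal A) (hx : IsSMulRegular A x)
    [IsRegularLocalRing (A ⧸ Ideal.span {x})] : IsRegularLocalRing A := by
  let π := Ideal.Quotient.mk (Ideal.span {x})
  have hπ : Function.Surjective π := Ideal.Quotient.mk_surjective
  have hker : RingHom.ker π = Ideal.span {x} := Ideal.mk_ker
  have hkerle : RingHom.ker π ≤ maximalIdeal A :=
    hker.trans_le ((Ideal.span_singleton_le_iff_mem _).mpr hxm)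
  have hkerone : (RingHom.ker π).spanFinrank ≤ 1 := by
    rw [hker, ← Set.ncard_singleton x]
    exact Submodule.spanFinrank_span_le_ncard_of_finite (Set.finite_singleton x)
  have hembdim : (maximalIdeal A).spanFinrank ≤
      (maximalIdeal (A ⧸ Ideal.span {x})).spanFinrank + 1 := by
    rw [← map_maximalIdeal_of_surjective π hπ]
    exact (spanFinrank_le_spanFinrank_map_add_spanFinrank_ker hπ (Ideal.fg_of_isNoetherianRing _)
      hkerle (Ideal.fg_of_isNoetherianRing _)).trans (Nat.add_le_add_left hkerone _)
  refine IsRegularLocalRing.of_spanFinrank_maximalIdeal_le A ?_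
  rw [← ringKrullDim_quotient_span_singleton_succ_eq_ringKrullDim hx hxm,
    ← IsRegularLocalRing.spanFinrank_maximalIdeal]
  exact_mod_cast hembdim

theorem isRegularLocalRing_of_maximalIdeal_eq_bot {A : Type*} [CommRing A] [IsLocalRing A]
    (h : maximalIdeal A = ⊥) : IsRegularLocalRing A :=
  let := ((isField_iff_maximalIdeal_eq).mpr h).toField
  inferInstance

section RegularLocalRing

variable {A : Type u} [CommRing A] [IsLocalRing A] [IsNoetherianRing A]

theorem maximalIdeal_eq_bot_of_hasProjectiveDimensionLE_of_mem_associatedPrimes {n : ℕ}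
    (h : HasProjectiveDimensionLE (ModuleCat.of A (ResidueField A)) n)
    (hA : maximalIdeal A ∈ associatedPrimes A A) : maximalIdeal A = ⊥ := by
  obtain ⟨-, ι, hι⟩ := (isAssociatedPrime_iff_exists_injective_linearMap _ _).mp hA
  have : Module.Free A (ResidueField A) :=
    free_of_hasProjectiveDimensionLE_of_residueField_injective hι h
  exact maximalIdeal_eq_bot_of_faithfulSMul_residueField

theorem isRegularLocalRing_of_hasProjectiveDimensionLE_residueField {n : ℕ}
    (h : HasProjectiveDimensionLE (ModuleCat.of A (ResidueField A)) n) :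
    IsRegularLocalRing A := by
  obtain ⟨d, hd⟩ : ∃ d : ℕ, ringKrullDim A < d :=
    ⟨(maximalIdeal A).spanFinrank + 1,
      (ringKrullDim_le_spanFinrank_maximalIdeal A).trans_lt (mod_cast Nat.lt_succ_self _)⟩
  induction d generalizing A with
  | zero => exact absurd ringKrullDim_nonneg_of_nontrivial hd.not_ge
  | succ d ih =>
    by_cases hm : maximalIdeal A = ⊥
    · exact isRegularLocalRing_of_maximalIdeal_eq_bot hm
    obtain ⟨x, hxm, hxm2, hx⟩ := exists_isSMulRegular_mem_maximalIdeal_notMem_sq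
      (mt (maximalIdeal_eq_bot_of_hasProjectiveDimensionLE_of_mem_associatedPrimes h) hm) hm
    have : Nontrivial (A ⧸ Ideal.span {x}) :=
      Ideal.Quotient.nontrivial_iff.mpr (Ideal.span_singleton_ne_top hxm)
    have : IsLocalRing (A ⧸ Ideal.span {x}) := .of_surjective' _ Ideal.Quotient.mk_surjective
    have hdim : ringKrullDim (A ⧸ Ideal.span {x}) < d := by
      rw [← ringKrullDim_quotient_span_singleton_succ_eq_ringKrullDim hx hxm, Nat.cast_succ] at hd
      exact lt_of_add_lt_add_right hd
    have hk : HasProjectiveDimensionLE (ModuleCat.of A (ResidueField A)) (n + 1) :=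
      hasProjectiveDimensionLT_of_ge _ (n + 1) (n + 2) (Nat.le_succ _)
    have := ih (hasProjectiveDimensionLE_residueField_quotient hxm hxm2 hx
      (hasProjectiveDimensionLE_quotient_succ_iff.mp hk)) hdim
    exact isRegularLocalRing_of_quotient_span_singleton hxm hx

end RegularLocalRing

theorem regular_of_finite_globalDim_general {R : Type u} [CommRing R] [IsNoetherianRing R]
    (p : Ideal R) [p.IsPrime] {n : ℕ}
    (h : HasProjectiveDimensionLE (ModuleCat.of R (R ⧸ p)) n) :
    IsRegularLocalRing (Localization.AtPrime p) :=
  isRegularLocalRing_of_hasProjectiveDimensionLE_residueField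
    (hasProjectiveDimensionLE_residueField_of_quotient p h)

theorem regular_of_finite_globalDim
    (R : Type) [CommRing R] [IsNoetherianRing R] (h : ∃ n : ℕ, GlobalDimLE R n) :
    ∀ p : PrimeSpectrum R, IsRegularLocal (Localization.AtPrime p.asIdeal) := by
  obtain ⟨n, hn⟩ := h
  intro p
  obtain ⟨P, hP⟩ := hn (ModuleCat.of R (R ⧸ p.asIdeal))
  exact (IsRegularLocalRing.iff_finrank_cotangentSpace _).mp
    (regular_of_finite_globalDim_general p.asIdeal
      (hasProjectiveDimensionLE_of_projectiveResolution P hP))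
end
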